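/- arXiv:2507.10417 — 7 statements merged into one kernel-verified Lean document; each statement's English description precedes it below -/
import Mathlib

section
/- Let F be a field, let k ≤ n be positive integers, and let G₀ ∈ F^{k×n} be a matrix with the MDS property. Then the minor product polynomial P(X) ∈ F[x_{1,1},…,x_{k,n−k}] of G₀ is not the zero polynomial. -/
/-!
Since the polynomial ring is a domain, it suffices that each factor `P_{I,J}` is nonzero, and for
that it suffices that it has a nonzero value at some point.

Write `|I| = k - t` and `|J| = k + t`, and regard `J` as a subset of `{1,…,n}`. Only `k` columns
lie outside the support of `G₁`, so `J` contains a set `T` of `t` columns, all among the first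
`n - k`. Extend `I` by a set `E` of `t` further columns to a `k`-subset `I ∪ E` of `{1,…,n}`.
Specialize the columns of `X` indexed by `T` to the columns of `G₀` indexed by `E`, and the other
columns of `X` to zero. If a row vector `(a, b)` kills the selected columns of `G₁ᶜ`, then `b`
kills the `k` columns `J \ T` of `G₀`, so `b = 0` by the MDS property; then `a` kills the `k`
columns `I ∪ E` of `G₀`, so `a = 0`, again by the MDS property (`sliding_vecMul_injective`).
Hence the specialized minor is nonzero.
-/


open Matrix MvPolynomial

/-- The sliding generator matrix `G₁ᶜ = [[G₀, G₁],[0, G₀]]`. -/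
def slidingMat {R : Type*} [Semiring R] {k n : ℕ}
    (G0 G1 : Matrix (Fin k) (Fin n) R) : Matrix (Fin (k + k)) (Fin (n + n)) R :=
  Matrix.reindex finSumFinEquiv finSumFinEquiv (Matrix.fromBlocks G0 G1 0 G0)

/-- The (full-size) minor of `M` given by selecting the columns in `S`. -/
noncomputable def minorOfCols {R : Type*} [CommRing R] {K N : ℕ}
    (M : Matrix (Fin K) (Fin N) R) (S : Finset (Fin N)) : R :=
  if h : S.card = K then (M.submatrix id fun i => (S.orderIsoOfFin h i).1).det
  else 1

/-- A `k × n` matrix has the MDS property if every `k × k` minor is nonzero. -/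
def HasMDSProperty {F : Type*} [Field F] {k n : ℕ} (G : Matrix (Fin k) (Fin n) F) : Prop :=
  ∀ S : Finset (Fin n), S.card = k → minorOfCols G S ≠ 0

/-- The matrix `G₁ = (X | 0)` where `X` is a `k × (n-k)` matrix of indeterminates. -/
noncomputable def varMatrixG1 (F : Type*) [Field F] (k n : ℕ) :
    Matrix (Fin k) (Fin n) (MvPolynomial (Fin k × Fin (n - k)) F) :=
  fun r c => if h : (c : ℕ) < n - k then MvPolynomial.X (r, ⟨(c : ℕ), h⟩) else 0

open scoped Classical in
/-- Pairs `(I, J)` of column index sets with `I ⊆ {1,…,n}`, `J ⊆ {n+1,…,2n}`,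
`|I| ≤ k ≤ |J|` and `|I| + |J| = 2k`. -/
noncomputable def mdpPairs (n k : ℕ) :
    Finset (Finset (Fin (n + n)) × Finset (Fin (n + n))) :=
  Finset.univ.filter fun p =>
    (∀ x ∈ p.1, (x : ℕ) < n) ∧ (∀ x ∈ p.2, n ≤ (x : ℕ)) ∧
      p.1.card ≤ k ∧ k ≤ p.2.card ∧ p.1.card + p.2.card = k + k

/-- The minor product polynomial `P(X) = ∏_{(I,J)} P_{I,J}(X)` of `G₀`. -/
noncomputable def minorProductPoly {F : Type*} [Field F] {k n : ℕ}
    (G0 : Matrix (Fin k) (Fin n) F) : MvPolynomial (Fin k × Fin (n - k)) F :=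
  ∏ p ∈ mdpPairs n k,
    minorOfCols (slidingMat (G0.map MvPolynomial.C) (varMatrixG1 F k n)) (p.1 ∪ p.2)

/-- Over a field, a minor is nonzero as soon as no nonzero row vector kills all of its columns. -/
lemma minorOfCols_ne_zero_of_vecMul {F : Type*} [Field F] {K N : ℕ}
    (M : Matrix (Fin K) (Fin N) F) (S : Finset (Fin N))
    (H : ∀ v : Fin K → F, (∀ j ∈ S, (v ᵥ* M) j = 0) → v = 0) : minorOfCols M S ≠ 0 := by
  unfold minorOfCols
  split_ifs with h
  · intro hdet
    obtain ⟨v, hv, hv0⟩ := Matrix.exists_vecMul_eq_zero_iff.mpr hdet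
    refine hv (H v fun j hj => ?_)
    have := congrFun hv0 ((S.orderIsoOfFin h).symm ⟨j, hj⟩)
    have hs := (S.orderIsoOfFin h).apply_symm_apply ⟨j, hj⟩
    simpa only [Matrix.vecMul, dotProduct, Matrix.submatrix_apply, id, hs, Pi.zero_apply] using this
  · exact one_ne_zero

lemma HasMDSProperty.eq_zero_of_vecMul {F : Type*} [Field F] {k n : ℕ}
    {G : Matrix (Fin k) (Fin n) F} (hG : HasMDSProperty G) {S : Finset (Fin n)}
    (hS : S.card = k) {v : Fin k → F} (hv : ∀ j ∈ S, (v ᵥ* G) j = 0) : v = 0 := by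
  by_contra hne
  refine hG S hS ?_
  unfold minorOfCols
  rw [dif_pos hS]
  refine Matrix.exists_vecMul_eq_zero_iff.mp ⟨v, hne, ?_⟩
  ext i
  exact hv _ (S.orderIsoOfFin hS i).2

lemma map_minorOfCols {R R' : Type*} [CommRing R] [CommRing R'] (f : R →+* R') {K N : ℕ}
    (M : Matrix (Fin K) (Fin N) R) (S : Finset (Fin N)) :
    f (minorOfCols M S) = minorOfCols (M.map f) S := by
  unfold minorOfCols
  split_ifs with h
  · rw [RingHom.map_det]
    rfl
  · exact map_one f

lemma slidingMat_map {R R' : Type*} [CommRing R] [CommRing R'] (f : R →+* R') {k n : ℕ}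
    (G0 G1 : Matrix (Fin k) (Fin n) R) :
    (slidingMat G0 G1).map f = slidingMat (G0.map f) (G1.map f) := by
  ext i j
  refine Fin.addCases (fun i => ?_) (fun i => ?_) i <;>
  refine Fin.addCases (fun j => ?_) (fun j => ?_) j <;>
  simp [slidingMat, -Fin.natAdd_eq_addNat]

lemma vecMul_slidingMat_castAdd {R : Type*} [CommRing R] {k n : ℕ}
    (G0 G1 : Matrix (Fin k) (Fin n) R) (v : Fin (k + k) → R) (j : Fin n) :
    (v ᵥ* slidingMat G0 G1) (Fin.castAdd n j) = ((fun i => v (Fin.castAdd k i)) ᵥ* G0) j := by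
  simp [Matrix.vecMul, dotProduct, Fin.sum_univ_add, slidingMat, -Fin.natAdd_eq_addNat]

lemma vecMul_slidingMat_natAdd {R : Type*} [CommRing R] {k n : ℕ}
    (G0 G1 : Matrix (Fin k) (Fin n) R) (v : Fin (k + k) → R) (j : Fin n) :
    (v ᵥ* slidingMat G0 G1) (Fin.natAdd n j) =
      ((fun i => v (Fin.castAdd k i)) ᵥ* G1) j + ((fun i => v (Fin.natAdd k i)) ᵥ* G0) j := by
  simp [Matrix.vecMul, dotProduct, Fin.sum_univ_add, slidingMat, -Fin.natAdd_eq_addNat]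

/-- The row-kernel argument for a specialized `G₁`: its columns in `T` run through the columns of
`G₀` in `E`, where `I ∪ E` has `k` elements, and it vanishes on `J \ T`, which also has `k`
elements. Then only the zero row vector kills the columns of `[[G₀, G₁],[0, G₀]]` selected by `I`
on the left and `J` on the right. -/
lemma sliding_vecMul_injective {F : Type*} [Field F] {k n : ℕ}
    {G0 G1 : Matrix (Fin k) (Fin n) F} (hG : HasMDSProperty G0) {I E J T : Finset (Fin n)}
    (hIE : (I ∪ E).card = k) (hTJ : T ⊆ J) (hJT : (J \ T).card = k)
    (hzero : ∀ j ∈ J \ T, ∀ r, G1 r j = 0)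
    (hcol : ∀ e ∈ E, ∃ j ∈ T, ∀ r, G1 r j = G0 r e) {v : Fin (k + k) → F}
    (hI : ∀ j ∈ I, (v ᵥ* slidingMat G0 G1) (Fin.castAdd n j) = 0)
    (hJ : ∀ j ∈ J, (v ᵥ* slidingMat G0 G1) (Fin.natAdd n j) = 0) : v = 0 := by
  simp only [vecMul_slidingMat_castAdd] at hI
  simp only [vecMul_slidingMat_natAdd] at hJ
  have hb : (fun i => v (Fin.natAdd k i)) = 0 := by
    refine hG.eq_zero_of_vecMul hJT fun j hj => ?_
    have h := hJ j (Finset.mem_sdiff.mp hj).1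
    simpa [Matrix.vecMul, dotProduct, hzero j hj] using h
  have ha : (fun i => v (Fin.castAdd k i)) = 0 := by
    refine hG.eq_zero_of_vecMul hIE fun j hj => ?_
    rcases Finset.mem_union.mp hj with hj | hj
    · exact hI j hj
    · obtain ⟨c, hc, hce⟩ := hcol j hj
      have h := hJ c (hTJ hc)
      rw [hb] at h
      simpa [Matrix.vecMul, dotProduct, hce] using h
  ext i
  refine Fin.addCases (fun i => ?_) (fun i => ?_) i
  · exact congrFun ha i
  · exact congrFun hb i

/-- The combinatorial choices: `T` inside `J` and the support of `G₁`, and `E` extending `I` to a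
`k`-set, with `T` and `E` of the same size. -/
lemma exists_columns {k n : ℕ} (hkn : k ≤ n) (I J : Finset (Fin n)) (hI : I.card ≤ k)
    (hIJ : I.card + J.card = k + k) :
    ∃ E T : Finset (Fin n), (I ∪ E).card = k ∧ T ⊆ J ∧ (J \ T).card = k ∧
      (∀ j ∈ T, (j : ℕ) < n - k) ∧ T.card = E.card := by
  obtain ⟨I', hII', hI'⟩ := Finset.exists_superset_card_eq hI (by simpa using hkn)
  have hhigh : (J.filter fun j : Fin n => ¬ (j : ℕ) < n - k).card ≤ k := by
    calc (J.filter fun j : Fin n => ¬ (j : ℕ) < n - k).card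
        ≤ (Finset.Ico (n - k) n).card := by
          refine Finset.card_le_card_of_injOn (fun j : Fin n => (j : ℕ)) ?_ ?_
          · intro j hj
            simp at hj ⊢
            omega
          · exact fun _ _ _ _ h => Fin.ext h
      _ = k := by simp; omega
  have hsplit := Finset.card_filter_add_card_filter_not (s := J) (fun j : Fin n => (j : ℕ) < n - k)
  obtain ⟨T, hT, hTc⟩ := Finset.exists_subset_card_eq
    (s := J.filter fun j : Fin n => (j : ℕ) < n - k) (n := k - I.card) (by omega)
  have hTJ : T ⊆ J := hT.trans (Finset.filter_subset _ _)
  refine ⟨I' \ I, T, ?_, hTJ, ?_, fun j hj => (Finset.mem_filter.mp (hT hj)).2, ?_⟩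
  · rw [Finset.union_sdiff_of_subset hII', hI']
  · rw [Finset.card_sdiff_of_subset hTJ]; omega
  · rw [Finset.card_sdiff_of_subset hII']; omega

theorem stmt0 {F : Type*} [Field F] {k n : ℕ} (hk : 0 < k) (hkn : k ≤ n)
    (G0 : Matrix (Fin k) (Fin n) F) (hMDS : HasMDSProperty G0) :
    minorProductPoly G0 ≠ 0 := by
  unfold minorProductPoly
  refine Finset.prod_ne_zero_iff.mpr ?_
  rintro ⟨I, J⟩ hp
  simp only [mdpPairs, Finset.mem_filter, Finset.mem_univ, true_and] at hp
  obtain ⟨hIlt, hJge, hIk, -, hIJ⟩ := hp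
  set I0 : Finset (Fin n) := Finset.univ.filter fun j => Fin.castAdd n j ∈ I with hI0
  set J0 : Finset (Fin n) := Finset.univ.filter fun j => Fin.natAdd n j ∈ J with hJ0
  have hIc : I0.card = I.card := by
    rw [← Finset.card_map (Fin.castAddEmb n)]
    congr 1
    ext x
    refine Fin.addCases (fun x => ?_) (fun x => ?_) x
    · simp [hI0]
    · have hx : Fin.natAdd n x ∉ I := fun h => by simpa using hIlt _ h
      simp only [hx, iff_false, Finset.mem_map, not_exists, not_and]
      intro y _ hy
      have := congrArg Fin.val hy
      simp at this
      omega
  have hJc : J0.card = J.card := by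
    rw [← Finset.card_map (Fin.natAddEmb n)]
    congr 1
    ext x
    refine Fin.addCases (fun x => ?_) (fun x => ?_) x
    · have hx : Fin.castAdd n x ∉ J := fun h => by
        have := hJge _ h
        simp at this
        omega
      simp only [hx, iff_false, Finset.mem_map, not_exists, not_and]
      intro y _ hy
      have := congrArg Fin.val hy
      simp at this
      omega
    · simp [hJ0]
  obtain ⟨E, T, hIE, hTJ, hJT, hTlt, hTE⟩ :=
    exists_columns hkn I0 J0 (by omega) (by omega)
  let σ : T ≃ E := Finset.equivOfCardEq hTE
  -- The point at which the factor is evaluated: column `c ∈ T` of `X` becomes column `σ c` of `G₀`.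
  let x : Fin k × Fin (n - k) → F := fun p =>
    if h : Fin.castLE (Nat.sub_le n k) p.2 ∈ T then G0 p.1 (σ ⟨_, h⟩).1 else 0
  intro h0
  have h1 := congrArg (MvPolynomial.eval x) h0
  rw [map_minorOfCols, slidingMat_map, map_zero] at h1
  have hG0 : (G0.map MvPolynomial.C).map (MvPolynomial.eval x) = G0 := by
    ext i j
    simp
  rw [hG0] at h1
  refine minorOfCols_ne_zero_of_vecMul _ _ (fun v hv => ?_) h1
  refine sliding_vecMul_injective hMDS hIE hTJ hJT ?_ ?_
    (fun j hj => hv _ (Finset.mem_union_left _ (Finset.mem_filter.mp hj).2))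
    (fun j hj => hv _ (Finset.mem_union_right _ (Finset.mem_filter.mp hj).2))
  · intro j hj r
    have hjT := (Finset.mem_sdiff.mp hj).2
    by_cases hjn : (j : ℕ) < n - k
    · have hjT' : Fin.castLE (Nat.sub_le n k) ⟨j, hjn⟩ ∉ T := hjT
      simp only [Matrix.map_apply, varMatrixG1, dif_pos hjn, MvPolynomial.eval_X, x]
      rw [dif_neg hjT']
    · simp [varMatrixG1, hjn]
  · intro e he
    obtain ⟨⟨c, hc⟩, hσ⟩ := σ.surjective ⟨e, he⟩
    refine ⟨c, hc, fun r => ?_⟩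
    have hcn := hTlt c hc
    have hcT : Fin.castLE (Nat.sub_le n k) ⟨c, hcn⟩ ∈ T := hc
    simp only [Matrix.map_apply, varMatrixG1, dif_pos hcn, MvPolynomial.eval_X, x]
    rw [dif_pos hcT]
    exact congrArg (fun z : E => G0 r z.1) hσ
end

section
/- Let F be a field, let k ≤ n be positive integers, let G₀ ∈ F^{k×n} have the MDS property, and let I ⊆ {1,…,n} and J ⊆ {n+1,…,2n} be column index sets with |I| ≤ k ≤ |J| and |I| + |J| = 2k. Then there exists a matrix X ∈ F^{k×(n−k)} all of whose entries are 0 or 1 such that, setting G₁ = (X | 0_{k×k}) ∈ F^{k×n} and G₁ᶜ = [[G₀, G₁],[0, G₀]] ∈ F^{2k×2n}, the 2k×2k submatrix of G₁ᶜ consisting of the columns indexed by I ∪ J is invertible. -/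
/-! Write `J` as a set of columns of the right block. Since the last `k` columns of `[1, n]` hold at
most `k` elements of `J`, some `A ⊆ J` with `|A| = |J| - k = k - |I|` avoids them, so the columns of
`G₁` indexed by `A` are columns of `X` and can be chosen freely. Every other column of `X` is set to
zero. By the MDS property the columns `(G₀)_I` are linearly independent, and by Steinitz exchange
they extend to a basis of `F^k` by `k - |I|` standard basis vectors (`exists_single_extension`);
these are the columns `X_A`. Up to a column permutation the matrix is then block triangular,
`[[ (G₀)_I | X_A, 0 ], [ 0 | (G₀)_A, (G₀)_{J \ A} ]]`, with both diagonal blocks invertible: in a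
linear relation among its columns, the upper half kills the coefficients on `I` and `A`, after which
the lower half kills those on `J \ A` (`linearIndepOn_blocks`). -/


open Matrix

/-- The matrix `G₁ = (X | 0_{k×k})` built from a `k × (n-k)` matrix `X`. -/
def padRight {F : Type*} [Zero F] {k n : ℕ} (X : Matrix (Fin k) (Fin (n - k)) F) :
    Matrix (Fin k) (Fin n) F :=
  fun r c => if h : (c : ℕ) < n - k then X r ⟨(c : ℕ), h⟩ else 0

/-- Under the MDS property any at most `k` columns are independent: enlarge them to exactly `k`
columns, which form an invertible matrix. This is where `k ≤ n` matters. -/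
theorem HasMDSProperty.linearIndepOn {F : Type*} [Field F] {k n : ℕ}
    {G0 : Matrix (Fin k) (Fin n) F} (hMDS : HasMDSProperty G0) (hkn : k ≤ n)
    (S : Finset (Fin n)) (hS : S.card ≤ k) : LinearIndepOn F G0ᵀ (S : Set (Fin n)) := by
  obtain ⟨T, hST, hT⟩ := Finset.exists_superset_card_eq hS (by simpa using hkn)
  refine LinearIndepOn.mono ?_ (Finset.coe_subset.mpr hST)
  have h := hMDS T hT
  rw [minorOfCols, dif_pos hT] at h
  have h2 := Matrix.linearIndependent_cols_iff_isUnit.mpr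
    ((Matrix.isUnit_iff_isUnit_det _).mpr (isUnit_iff_ne_zero.mpr h))
  exact (linearIndependent_equiv' (T.orderIsoOfFin hT).toEquiv rfl).mp h2

/-- Steinitz exchange: a linearly independent family `(G₀)_I` of vectors in `F^k` extends by
standard basis vectors `e_{φ a}`, one for each `a ∈ A`, whenever `|I| + |A| = k`. -/
theorem exists_single_extension {F : Type*} [Field F] {k n : ℕ} (hk : 0 < k)
    (v : Fin n → Fin k → F) (I A : Finset (Fin n))
    (hI : LinearIndepOn F v (I : Set (Fin n))) (hc : I.card + A.card = k) :
    ∃ φ : Fin n → Fin k, LinearIndepOn F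
      (Sum.elim v (fun a => (Pi.single (φ a) 1 : Fin k → F)))
      (I.disjSum A : Set (Fin n ⊕ Fin n)) := by
  classical
  let w : Fin n ⊕ Fin k → Fin k → F := Sum.elim v (fun j => Pi.single j 1)
  have hs : LinearIndepOn F w (Sum.inl '' (I : Set (Fin n))) :=
    LinearIndepOn.image_of_comp Sum.inl w hI
  obtain ⟨b, hb2, hb1, hb3, hb4⟩ := exists_linearIndepOn_extension hs
    (Set.subset_union_left (t := Set.range Sum.inr))
  -- `b` indexes a basis of `F^k`, since its span contains every standard basis vector
  have hspan : ⊤ ≤ Submodule.span F (w '' b) := by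
    rw [← (Pi.basisFun F (Fin k)).span_eq, Submodule.span_le]
    rintro _ ⟨j, rfl⟩
    exact hb3 ⟨Sum.inr j, Or.inr ⟨j, rfl⟩, by simp [w]⟩
  have hbcard : b.toFinset.card = k := by
    have h1 := Module.finrank_eq_card_basis
      (Module.Basis.mk (v := fun x : b => w x) hb4 (by rwa [← Set.image_eq_range]))
    rw [Set.toFinset_card, ← h1, Module.finrank_fin_fun]
  let T : Finset (Fin k) := Finset.univ.filter (fun j => Sum.inr j ∈ b)
  have hbT : b.toFinset = I.disjSum T := by
    ext x
    rcases x with i | j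
    · simp only [Set.mem_toFinset, Finset.inl_mem_disjSum]
      constructor
      · intro h
        simpa using hb2 h
      · intro h
        exact hb1 ⟨i, h, rfl⟩
    · simp [T]
  have hTA : Fintype.card A = Fintype.card T := by
    rw [hbT, Finset.card_disjSum] at hbcard
    simp only [Fintype.card_coe]
    omega
  let e := Fintype.equivOfCardEq hTA
  let φ : Fin n → Fin k := fun a => if h : a ∈ A then (e ⟨a, h⟩ : Fin k) else ⟨0, hk⟩
  have hφ : ∀ a (h : a ∈ A), φ a = e ⟨a, h⟩ := fun a h => dif_pos h
  refine ⟨φ, ?_⟩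
  have hw : Sum.elim v (fun a => (Pi.single (φ a) 1 : Fin k → F)) = w ∘ Sum.map id φ := by
    ext x; rcases x with x | x <;> rfl
  rw [hw]
  refine LinearIndepOn.comp_of_image (hb4.mono ?_) ?_
  · rintro _ ⟨x | x, hx, rfl⟩
    · exact hb1 ⟨x, by simpa using hx, rfl⟩
    · have hx' : x ∈ A := by simpa using hx
      have := (Finset.mem_filter.mp (e ⟨x, hx'⟩).2).2
      rwa [Sum.map_inr, hφ x hx']
  · rintro (x | x) hx (y | y) hy hxy
    · simpa using hxy
    · simp at hxy
    · simp at hxy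
    · have hx' : x ∈ A := by simpa using hx
      have hy' : y ∈ A := by simpa using hy
      simp only [Sum.map_inr, Sum.inr.injEq, hφ x hx', hφ y hy'] at hxy
      simpa using e.injective (Subtype.ext hxy)

/-- If `G₁` vanishes outside the columns `A ⊆ J`, the columns of `[[G₀, G₁], [0, G₀]]` indexed by
`I` on the left and `J` on the right are, up to order, block triangular with diagonal blocks
`((G₀)_I | (G₁)_A)` and `(G₀)_{J \ A}`, so independence of the columns of these two suffices. -/
theorem linearIndepOn_blocks {F : Type*} [Field F] {k n : ℕ}
    (G0 G1 : Matrix (Fin k) (Fin n) F) (I J A : Finset (Fin n)) (hAJ : A ⊆ J)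
    (hG1 : ∀ c ∉ A, G1ᵀ c = 0)
    (htop : LinearIndepOn F (Sum.elim G0ᵀ G1ᵀ) (I.disjSum A : Set (Fin n ⊕ Fin n)))
    (hbot : LinearIndepOn F G0ᵀ ((J \ A : Finset (Fin n)) : Set (Fin n))) :
    LinearIndepOn F (Matrix.fromBlocks G0 G1 0 G0)ᵀ (I.disjSum J : Set (Fin n ⊕ Fin n)) := by
  classical
  replace htop := linearIndepOn_finset_iff.mp htop
  replace hbot := linearIndepOn_finset_iff.mp hbot
  refine linearIndepOn_finset_iff.mpr fun g hg => ?_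
  rw [Finset.sum_disjSum] at hg
  have hT : ∑ x ∈ I.disjSum A, g x • Sum.elim G0ᵀ G1ᵀ x = 0 := by
    rw [Finset.sum_disjSum, Finset.sum_subset hAJ]
    · ext r
      have h : ∑ c ∈ I, g (Sum.inl c) * G0 r c + ∑ c ∈ J, g (Sum.inr c) * G1 r c = 0 := by
        simpa [Finset.sum_apply] using congrFun hg (Sum.inl r)
      simp only [Pi.add_apply, Finset.sum_apply, Pi.smul_apply, smul_eq_mul]
      exact h
    · intro x _ hx
      exact smul_eq_zero_of_right _ (hG1 x hx)
  have h1 := htop g hT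
  have hB : ∑ x ∈ J \ A, g (Sum.inr x) • G0ᵀ x = 0 := by
    rw [Finset.sum_subset Finset.sdiff_subset]
    · ext r
      simpa [Finset.sum_apply] using congrFun hg (Sum.inr r)
    · intro x hx hx'
      have : x ∈ A := by simpa [hx] using hx'
      simp [h1 (Sum.inr x) (by simpa using this)]
  have h2 := hbot (fun x => g (Sum.inr x)) hB
  rintro (x | x) hx
  · exact h1 _ (by simpa using hx)
  · by_cases hA : x ∈ A
    · exact h1 _ (by simpa using hA)
    · exact h2 x (by simpa [hA] using hx)

theorem stmt1 {F : Type*} [Field F] {k n : ℕ} (hk : 0 < k) (hkn : k ≤ n)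
    (G0 : Matrix (Fin k) (Fin n) F) (hMDS : HasMDSProperty G0)
    (I J : Finset (Fin (n + n)))
    (hI : ∀ x ∈ I, (x : ℕ) < n) (hJ : ∀ x ∈ J, n ≤ (x : ℕ))
    (hIc : I.card ≤ k) (hJc : k ≤ J.card) (hsum : I.card + J.card = k + k)
    (hcard : (I ∪ J).card = k + k) :
    ∃ X : Matrix (Fin k) (Fin (n - k)) F,
      (∀ r s, X r s = 0 ∨ X r s = 1) ∧
      IsUnit ((slidingMat G0 (padRight X)).submatrix id
        fun i => ((I ∪ J).orderIsoOfFin hcard i).1) := by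
  classical
  -- `I` and `J` as column sets of a single block
  let I' : Finset (Fin n) := Finset.univ.filter (fun i => Fin.castAdd n i ∈ I)
  let J' : Finset (Fin n) := Finset.univ.filter (fun j => Fin.natAdd n j ∈ J)
  have hII : I = I'.map (Fin.castAddEmb n) := by
    ext x
    refine Fin.addCases (fun i => ?_) (fun j => ?_) x
    · simp [I']
    · have : Fin.natAdd n j ∉ I := fun h => by simpa using hI _ h
      simp only [this, Finset.mem_map, Fin.castAddEmb_apply, false_iff]
      rintro ⟨i, -, hi⟩
      have := i.2
      simp [Fin.ext_iff] at hi
      omega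
  have hJJ : J = J'.map (Fin.natAddEmb n) := by
    ext x
    refine Fin.addCases (fun i => ?_) (fun j => ?_) x
    · have : Fin.castAdd n i ∉ J := fun h => by
        have := hJ _ h
        simp at this
        omega
      simp [this, Fin.ext_iff]
      intros; omega
    · simp [J']
  have hIcard : I'.card = I.card := by rw [hII, Finset.card_map]
  have hJcard : J'.card = J.card := by rw [hJJ, Finset.card_map]
  -- at most `k` elements of `J'` lie in the columns where `padRight X` vanishes identically
  have hfree : J.card - k ≤ (J'.filter (fun j : Fin n => (j : ℕ) < n - k)).card := by
    have h1 := Finset.card_filter_add_card_filter_not (s := J') (fun j : Fin n => (j : ℕ) < n - k)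
    have h2 : (J'.filter (fun j : Fin n => ¬ (j : ℕ) < n - k)).card ≤ (Finset.Ico (n - k) n).card := by
      refine Finset.card_le_card_of_injOn (fun j : Fin n => (j : ℕ)) ?_ (Fin.val_injective.injOn)
      intro j hj
      have := j.2
      simp at hj ⊢
      omega
    rw [Nat.card_Ico] at h2
    omega
  obtain ⟨A, hA, hAcard⟩ := Finset.exists_subset_card_eq hfree
  have hAJ : A ⊆ J' := hA.trans (Finset.filter_subset _ _)
  have hAlt : ∀ a ∈ A, (a : ℕ) < n - k := fun a ha => (Finset.mem_filter.mp (hA ha)).2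
  obtain ⟨φ, hφ⟩ := exists_single_extension hk G0ᵀ I' A
    (hMDS.linearIndepOn hkn I' (by omega)) (by omega)
  let Y : Matrix (Fin k) (Fin n) F := fun r c => 
    if c ∈ A then (Pi.single (φ c) 1 : Fin k → F) r else 0
  let X : Matrix (Fin k) (Fin (n - k)) F := fun r s => Y r (Fin.castLE (Nat.sub_le n k) s)
  have hpad : padRight X = Y := by
    ext r c
    unfold padRight
    split_ifs with h
    · rfl
    · have : c ∉ A := fun hc => h (hAlt c hc)
      simp [Y, this]
  refine ⟨X, ?_, ?_⟩
  · intro r s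
    simp only [X, Y, Pi.single_apply]
    split_ifs <;> simp
  rw [hpad]
  have hmain : LinearIndepOn F (Matrix.fromBlocks G0 Y 0 G0)ᵀ
      (I'.disjSum J' : Set (Fin n ⊕ Fin n)) := by
    refine linearIndepOn_blocks G0 Y I' J' A hAJ ?_ ?_ ?_
    · intro c hc
      ext r
      change Y r c = 0
      simp [Y, hc]
    · refine hφ.congr ?_
      rintro (x | x) hx
      · rfl
      · have hx' : x ∈ A := by simpa using hx
        ext r
        change (Pi.single (φ x) 1 : Fin k → F) r = Y r x
        simp [Y, hx']
    · refine hMDS.linearIndepOn hkn _ ?_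
      rw [Finset.card_sdiff_of_subset hAJ]
      omega
  -- transport along the identifications of rows and columns
  have hmem : ∀ i, finSumFinEquiv.symm ((I ∪ J).orderIsoOfFin hcard i).1 ∈
      (I'.disjSum J' : Set (Fin n ⊕ Fin n)) := by
    intro i
    have h := ((I ∪ J).orderIsoOfFin hcard i).2
    generalize ((I ∪ J).orderIsoOfFin hcard i).1 = y at h
    obtain ⟨x, rfl⟩ := finSumFinEquiv.surjective y
    rw [Equiv.symm_apply_apply]
    rcases x with x | x <;> rcases Finset.mem_union.mp h with h | h
    · simpa [I'] using h
    · have := hJ _ h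
      simp at this
      omega
    · have := hI _ h
      simp at this
    · simpa [J'] using h
  rw [← Matrix.linearIndependent_cols_iff_isUnit]
  have h3 := LinearIndependent.comp hmain
    (fun i => ⟨finSumFinEquiv.symm ((I ∪ J).orderIsoOfFin hcard i).1, hmem i⟩) (by
      intro i j hij
      simpa using hij)
  exact h3.map' (LinearEquiv.funCongrLeft F F finSumFinEquiv.symm).toLinearMap
    (LinearEquiv.ker _)
end

section
/- Let F be a field, let k ≤ n be positive integers, let G₀ ∈ F^{k×n} be any matrix, and let I ⊆ {1,…,n}, J ⊆ {n+1,…,2n} be column index sets with |I| = i ≤ k ≤ j = |J| and i + j = 2k. Then the polynomial P_{I,J}(X) ∈ F[x_{1,1},…,x_{k,n−k}] is homogeneous of degree j − k. -/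
/-!
Give every column of the right block weight `1`, every row of the bottom block weight `1`, and all
other rows and columns weight `0`. A nonzero entry of `[[G₀, G₁], [0, G₀]]` is homogeneous of
degree (column weight) − (row weight): the constants of `G₀` in either diagonal block have degree
`0`, the indeterminates in the upper right block have degree `1`, and the lower left block, where
the difference would be `-1`, vanishes. Hence each nonzero term of the Leibniz expansion of the
minor has degree (total column weight) − (total row weight) `= |J| - k`.
-/

open Matrix MvPolynomial

/-- An entry outside the lower left block is homogeneous, of degree the column weight minus the
row weight; the equation `d + row weight = column weight` expresses this without truncated
subtraction and excludes the lower left block. -/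
lemma slidingMat_entry_isHomogeneous {F : Type*} [Field F] {k n : ℕ}
    (G0 : Matrix (Fin k) (Fin n) F) (r : Fin (k + k)) (c : Fin (n + n)) (d : ℕ)
    (hd : d + (if k ≤ (r : ℕ) then 1 else 0) = if n ≤ (c : ℕ) then 1 else 0) :
    (slidingMat (G0.map MvPolynomial.C) (varMatrixG1 F k n) r c).IsHomogeneous d := by
  obtain ⟨r, rfl⟩ := finSumFinEquiv.surjective r
  obtain ⟨c, rfl⟩ := finSumFinEquiv.surjective c
  rcases r with r | r <;> rcases c with c | c
  · obtain rfl : d = 0 := by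
      simpa [Nat.not_le.2 r.2, Nat.not_le.2 c.2] using hd
    simp only [slidingMat, reindex_apply, submatrix_apply, Equiv.symm_apply_apply,
      fromBlocks_apply₁₁, map_apply]
    exact isHomogeneous_C _ _
  · obtain rfl : d = 1 := by simpa [Nat.not_le.2 r.2] using hd
    simp only [slidingMat, reindex_apply, submatrix_apply, Equiv.symm_apply_apply,
      fromBlocks_apply₁₂, varMatrixG1]
    split_ifs
    · exact isHomogeneous_X _ _
    · exact isHomogeneous_zero _ _ _
  · simp [Nat.not_le.2 c.2] at hd
  · obtain rfl : d = 0 := by simpa using hd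
    simp only [slidingMat, reindex_apply, submatrix_apply, Equiv.symm_apply_apply,
      fromBlocks_apply₂₂, map_apply]
    exact isHomogeneous_C _ _

lemma slidingMat_lowerLeft {R : Type*} [Semiring R] {k n : ℕ}
    (G0 G1 : Matrix (Fin k) (Fin n) R) (r : Fin (k + k)) (c : Fin (n + n))
    (hr : k ≤ (r : ℕ)) (hc : (c : ℕ) < n) : slidingMat G0 G1 r c = 0 := by
  obtain ⟨r, rfl⟩ := finSumFinEquiv.surjective r
  obtain ⟨c, rfl⟩ := finSumFinEquiv.surjective c
  rcases r with r | r <;> rcases c with c | c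
  · simp at hr; omega
  · simp at hc
  · simp only [slidingMat, reindex_apply, submatrix_apply, Equiv.symm_apply_apply,
      fromBlocks_apply₂₁, Matrix.zero_apply]
  · simp at hc

lemma sum_rowWeight (k : ℕ) :
    ∑ r : Fin (k + k), (if k ≤ (r : ℕ) then 1 else 0) = k := by
  rw [Fin.sum_univ_add]
  simp

lemma sum_colWeight {n K : ℕ} (I J : Finset (Fin (n + n)))
    (hI : ∀ x ∈ I, (x : ℕ) < n) (hJ : ∀ x ∈ J, n ≤ (x : ℕ)) (h : (I ∪ J).card = K) :
    ∑ i : Fin K, (if n ≤ (((I ∪ J).orderIsoOfFin h i).1 : ℕ) then 1 else 0) = J.card := by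
  have hsub := Equiv.sum_comp ((I ∪ J).orderIsoOfFin h).toEquiv
    (fun x : ↥(I ∪ J) => if n ≤ (x.1 : ℕ) then 1 else 0)
  refine hsub.trans ?_
  rw [Finset.sum_coe_sort (I ∪ J) (fun x => if n ≤ (x : ℕ) then 1 else 0),
    ← Finset.card_filter]
  congr 1
  ext x
  have := hI x
  have := hJ x
  grind

theorem stmt2 {F : Type*} [Field F] {k n : ℕ} (hk : 0 < k) (hkn : k ≤ n)
    (G0 : Matrix (Fin k) (Fin n) F)
    (I J : Finset (Fin (n + n)))
    (hI : ∀ x ∈ I, (x : ℕ) < n) (hJ : ∀ x ∈ J, n ≤ (x : ℕ))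
    (hIc : I.card ≤ k) (hJc : k ≤ J.card) (hsum : I.card + J.card = k + k)
    (hcard : (I ∪ J).card = k + k) :
    MvPolynomial.IsHomogeneous
      (minorOfCols (slidingMat (G0.map MvPolynomial.C) (varMatrixG1 F k n)) (I ∪ J))
      (J.card - k) := by
  rw [minorOfCols, dif_pos hcard, det_apply]
  refine IsHomogeneous.sum _ _ _ fun σ _ => ?_
  rw [Units.smul_def, ← mem_homogeneousSubmodule]
  refine zsmul_mem ?_ _
  rw [mem_homogeneousSubmodule]
  simp only [submatrix_apply, id]
  set c : Fin (k + k) → Fin (n + n) := fun i => ((I ∪ J).orderIsoOfFin hcard i).1 with hc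
  -- A term that uses an entry of the lower left block is zero, hence homogeneous of any degree.
  by_cases hσ : ∃ i, k ≤ (σ i : ℕ) ∧ (c i : ℕ) < n
  · obtain ⟨i, hr, hl⟩ := hσ
    rw [Finset.prod_eq_zero (Finset.mem_univ i) (slidingMat_lowerLeft _ _ _ _ hr hl)]
    exact isHomogeneous_zero _ _ _
  · push Not at hσ
    have hd : ∀ i, ∃ d, d + (if k ≤ (σ i : ℕ) then 1 else 0) = if n ≤ (c i : ℕ) then 1 else 0 := by
      intro i
      refine ⟨(if n ≤ (c i : ℕ) then 1 else 0) - (if k ≤ (σ i : ℕ) then 1 else 0), ?_⟩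
      have := hσ i
      grind
    choose d hd using hd
    -- Summing the degree equations over all columns gives `∑ d + k = |J|`.
    have hdeg : ∑ i, d i = J.card - k := by
      have h := Finset.sum_congr (rfl : (Finset.univ : Finset (Fin (k + k))) = _) fun i _ => hd i
      rw [Finset.sum_add_distrib, sum_colWeight I J hI hJ hcard,
        Equiv.sum_comp σ (fun r => if k ≤ (r : ℕ) then 1 else 0), sum_rowWeight] at h
      omega
    rw [← hdeg]
    exact IsHomogeneous.prod _ _ _ fun i _ => slidingMat_entry_isHomogeneous G0 _ _ _ (hd i)
end

section
/- For all integers n ≥ 1 and 0 ≤ k ≤ n, one has d(n,k) = d(n,n−k). -/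
/-! The symmetry is realised by the substitution `(i, j) ↦ (n - j, n - i)`, which exchanges the index
sets for `k` and `n - k`. It preserves the summand because `C(n, i) = C(n, n - i)` and, by
`i + j = 2k`, the new weight `(n - i) - (n - k) = k - i` equals `j - k`. -/

/-- `d(n,k) = Σ_{0≤i≤k, k≤j≤n, i+j=2k} C(n,i)·C(n,j)·(j−k)`. -/
def dTotal (n k : ℕ) : ℕ :=
  ∑ i ∈ Finset.range (k + 1), ∑ j ∈ Finset.range (n + 1),
    if k ≤ j ∧ i + j = 2 * k then n.choose i * n.choose j * (j - k) else 0

theorem stmt4 (n k : ℕ) (hn : 1 ≤ n) (hk : k ≤ n) :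
    dTotal n k = dTotal n (n - k) := by
  unfold dTotal
  rw [← Finset.sum_product', ← Finset.sum_product', ← Finset.sum_filter, ← Finset.sum_filter]
  refine Finset.sum_nbij' (fun p => (n - p.2, n - p.1)) (fun p => (n - p.2, n - p.1)) ?_ ?_ ?_ ?_ ?_
  · rintro ⟨i, j⟩ h
    simp only [Finset.mem_filter, Finset.mem_product, Finset.mem_range] at h ⊢
    omega
  · rintro ⟨i, j⟩ h
    simp only [Finset.mem_filter, Finset.mem_product, Finset.mem_range] at h ⊢
    omega
  · rintro ⟨i, j⟩ h
    simp only [Finset.mem_filter, Finset.mem_product, Finset.mem_range, Prod.mk.injEq] at h ⊢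
    omega
  · rintro ⟨i, j⟩ h
    simp only [Finset.mem_filter, Finset.mem_product, Finset.mem_range, Prod.mk.injEq] at h ⊢
    omega
  · rintro ⟨i, j⟩ h
    simp only [Finset.mem_filter, Finset.mem_product, Finset.mem_range] at h ⊢
    have hw : n - i - (n - k) = j - k := by omega
    rw [Nat.choose_symm (by omega : j ≤ n), Nat.choose_symm (by omega : i ≤ n), hw,
      mul_comm (n.choose j)]
end

section
/- Let F be a field, let k ≤ n be positive integers, and let G₀ ∈ F^{k×n} be a matrix with the MDS property that is in standard form, i.e., G₀ = (I_k | A) for some A ∈ F^{k×(n−k)}. Then for every variable x_{r,s} (1 ≤ r ≤ k, 1 ≤ s ≤ n−k), the degree of x_{r,s} in the minor product polynomial P(X) of G₀ is at most d'(n,k). -/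
/-!
The indeterminate `x_{r,s}` occurs in exactly one entry of the sliding matrix: row `r` of the upper
block, column `n + s`. In the Leibniz expansion of a minor it therefore occurs with degree at most
one, and only in those terms that match column `n + s` with row `r`. All such terms vanish, so that
the minor `P_{I,J}` does not involve `x_{r,s}`, in each of the following cases:

* `n + s ∉ J`: there is no such term;
* `r ∈ I`: column `r` is the standard basis vector `e_r`, so its only nonzero entry lies in row `r`,
  which is already taken by column `n + s`;
* `|I| = k`: the columns in `I` vanish on the lower `k` rows, so a nonzero term matches them with
  all `k` upper rows, leaving no upper row for column `n + s`.

The degree of the product is thus at most the number of pairs `(I, J)` with `r ∉ I`, `|I| < k`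
and `n + s ∈ J`, and for given sizes `i` and `j` there are `C(n-1, i) * C(n-1, j-1)` of these.
-/

open Matrix MvPolynomial

/-- `d'(n,k) = Σ_{0≤i≤k−1, k+1≤j≤n, i+j=2k} C(n−1,i)·C(n−1,j−1)`. -/
def dPrime (n k : ℕ) : ℕ :=
  ∑ i ∈ Finset.range k, ∑ j ∈ Finset.range (n + 1),
    if k + 1 ≤ j ∧ i + j = 2 * k then (n - 1).choose i * (n - 1).choose (j - 1) else 0

/-! ### Degrees of minors in which a variable occurs once -/

section Minor

variable {F τ : Type*} [Field F] {K N : ℕ}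

/-- A bound on the degree of each nonzero Leibniz term bounds the degree of the determinant. -/
lemma degreeOf_det_le (M : Matrix (Fin K) (Fin K) (MvPolynomial τ F)) (v : τ) (d : ℕ)
    (h : ∀ σ : Equiv.Perm (Fin K), (∀ i, M (σ i) i ≠ 0) →
      ∑ i, degreeOf v (M (σ i) i) ≤ d) : degreeOf v M.det ≤ d := by
  rw [Matrix.det_apply']
  refine (degreeOf_sum_le _ _ _).trans (Finset.sup_le fun σ _ => ?_)
  by_cases h0 : ∀ i, M (σ i) i ≠ 0
  · refine (degreeOf_mul_le _ _ _).trans ?_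
    have hs : degreeOf v (((Equiv.Perm.sign σ : ℤ) : MvPolynomial τ F)) = 0 := by
      rw [← map_intCast (C : F →+* MvPolynomial τ F), degreeOf_C]
    rw [hs, zero_add]
    exact (degreeOf_prod_le _ _ _).trans (h σ h0)
  · push Not at h0
    obtain ⟨i, hi⟩ := h0
    have hp : ∏ i, M (σ i) i = 0 := Finset.prod_eq_zero (Finset.mem_univ i) hi
    simp [hp]

/-- If the variable `v` has degree at most one in the entry `(a, b)` and occurs in no other entry,
then it has degree at most one in every minor. -/
lemma degreeOf_minor_le_one (M : Matrix (Fin K) (Fin N) (MvPolynomial τ F)) (v : τ)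
    (a : Fin K) (b : Fin N)
    (hM : ∀ x y, degreeOf v (M x y) ≤ if x = a ∧ y = b then 1 else 0) (S : Finset (Fin N)) :
    degreeOf v (minorOfCols M S) ≤ 1 := by
  unfold minorOfCols
  split_ifs with h
  · refine degreeOf_det_le _ _ _ fun σ _ => ?_
    calc _ ≤ ∑ i, if i = σ.symm a then 1 else 0 := by
          refine Finset.sum_le_sum fun i _ => (hM _ _).trans ?_
          by_cases hi : σ i = a
          · have : i = σ.symm a := by rw [← hi]; simp
            rw [if_pos this]; split_ifs <;> simp
          · simp [hi]
      _ ≤ 1 := by simp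
  · simp

/-- If every Leibniz term through the only entry `(a, b)` involving `v` vanishes, then `v` does
not occur in the minor. A term is described by an injection `f` from columns to rows. -/
lemma degreeOf_minor_eq_zero (M : Matrix (Fin K) (Fin N) (MvPolynomial τ F)) (v : τ)
    (a : Fin K) (b : Fin N)
    (hM : ∀ x y, degreeOf v (M x y) ≤ if x = a ∧ y = b then 1 else 0) (S : Finset (Fin N))
    (hS : ∀ f : S → Fin K, Function.Injective f → ∀ hb : b ∈ S, f ⟨b, hb⟩ = a →
      ∃ y : S, M (f y) y = 0) :
    degreeOf v (minorOfCols M S) = 0 := by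
  unfold minorOfCols
  split_ifs with h
  · refine Nat.le_zero.1 (degreeOf_det_le _ _ _ fun σ hσ => ?_)
    refine (Finset.sum_eq_zero fun i _ => Nat.le_zero.1 ((hM _ _).trans ?_)).le
    rw [if_neg]
    rintro ⟨h1, h2⟩
    have hb : b ∈ S := h2 ▸ (S.orderIsoOfFin h i).2
    obtain ⟨y, hy⟩ := hS (fun y => σ ((S.orderIsoOfFin h).symm y))
      (σ.injective.comp (S.orderIsoOfFin h).symm.injective) hb (by
        have : (⟨b, hb⟩ : S) = S.orderIsoOfFin h i := Subtype.ext h2.symm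
        rw [this]; simpa using h1)
    apply hσ ((S.orderIsoOfFin h).symm y)
    have hcol : (S.orderIsoOfFin h ((S.orderIsoOfFin h).symm y)).1 = y := by
      rw [OrderIso.apply_symm_apply]
    exact (congrArg (M _) hcol).trans hy
  · simp

end Minor

/-! ### Minors of the sliding matrix -/

section Sliding

variable {R : Type*} [Semiring R] {k n : ℕ} (G0 G1 : Matrix (Fin k) (Fin n) R)

lemma slidingMat_castAdd_castAdd (x : Fin k) (y : Fin n) :
    slidingMat G0 G1 (Fin.castAdd k x) (Fin.castAdd n y) = G0 x y := by
  simp only [slidingMat, Matrix.reindex_apply, Matrix.submatrix_apply,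
    finSumFinEquiv_symm_apply_castAdd]
  rfl

lemma slidingMat_castAdd_natAdd (x : Fin k) (y : Fin n) :
    slidingMat G0 G1 (Fin.castAdd k x) (Fin.natAdd n y) = G1 x y := by
  simp only [slidingMat, Matrix.reindex_apply, Matrix.submatrix_apply,
    finSumFinEquiv_symm_apply_castAdd, finSumFinEquiv_symm_apply_natAdd]
  rfl

lemma slidingMat_natAdd_castAdd (x : Fin k) (y : Fin n) :
    slidingMat G0 G1 (Fin.natAdd k x) (Fin.castAdd n y) = 0 := by
  simp only [slidingMat, Matrix.reindex_apply, Matrix.submatrix_apply,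
    finSumFinEquiv_symm_apply_castAdd, finSumFinEquiv_symm_apply_natAdd]
  rfl

lemma slidingMat_natAdd_natAdd (x : Fin k) (y : Fin n) :
    slidingMat G0 G1 (Fin.natAdd k x) (Fin.natAdd n y) = G0 x y := by
  simp only [slidingMat, Matrix.reindex_apply, Matrix.submatrix_apply,
    finSumFinEquiv_symm_apply_natAdd]
  rfl

end Sliding

/-- The variable `x_{r,s}` occurs only in the entry (upper row `r`, column `n + s`) of the
sliding matrix. -/
lemma degreeOf_slidingMat_le {F : Type*} [Field F] {k n : ℕ} (G0 : Matrix (Fin k) (Fin n) F)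
    (r : Fin k) (s : Fin (n - k)) (x : Fin (k + k)) (y : Fin (n + n)) :
    degreeOf (r, s) (slidingMat (G0.map MvPolynomial.C) (varMatrixG1 F k n) x y) ≤
      if x = Fin.castAdd k r ∧ y = Fin.natAdd n (Fin.castLE (Nat.sub_le n k) s) then 1 else 0 := by
  induction x using Fin.addCases with
  | left x =>
    induction y using Fin.addCases with
    | left y => rw [slidingMat_castAdd_castAdd, Matrix.map_apply, degreeOf_C]; exact Nat.zero_le _
    | right y =>
      rw [slidingMat_castAdd_natAdd]
      unfold varMatrixG1
      split_ifs with h1 h2 h2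
      · rw [degreeOf_X]; split_ifs <;> simp
      · rw [degreeOf_X, if_neg]
        rintro h3
        simp only [Prod.mk.injEq] at h3
        obtain ⟨rfl, rfl⟩ := h3
        exact h2 ⟨rfl, by ext; simp⟩
      · simp
      · simp
  | right x =>
    induction y using Fin.addCases with
    | left y => rw [slidingMat_natAdd_castAdd, degreeOf_zero]; exact Nat.zero_le _
    | right y => rw [slidingMat_natAdd_natAdd, Matrix.map_apply, degreeOf_C]; exact Nat.zero_le _

/-- If column `c` of `G₀` is supported in row `r`, then the variable `x_{r,s}` occurs in `P_{I,J}`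
only if `c ∉ I`, `|I| < k` and `n + s ∈ J`. -/
lemma degreeOf_minor_slidingMat_eq_zero {F : Type*} [Field F] {k n : ℕ}
    (G0 : Matrix (Fin k) (Fin n) F) (r : Fin k) (s : Fin (n - k)) (c : Fin n)
    (hc : ∀ x, x ≠ r → G0 x c = 0) (I J : Finset (Fin (n + n)))
    (hI : ∀ x ∈ I, (x : ℕ) < n)
    (h : ¬ (Fin.castAdd n c ∉ I ∧ I.card < k ∧
      Fin.natAdd n (Fin.castLE (Nat.sub_le n k) s) ∈ J)) :
    degreeOf (r, s)
      (minorOfCols (slidingMat (G0.map MvPolynomial.C) (varMatrixG1 F k n)) (I ∪ J)) = 0 := by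
  set b : Fin (n + n) := Fin.natAdd n (Fin.castLE (Nat.sub_le n k) s) with hbdef
  have hbI : b ∉ I := fun hb => by
    have := hI b hb
    simp [hbdef] at this
  refine degreeOf_minor_eq_zero _ _ _ b (degreeOf_slidingMat_le G0 r s) _ ?_
  intro f hf hb hfb
  have hbJ : b ∈ J := (Finset.mem_union.1 hb).resolve_left hbI
  by_contra! hne
  -- In a nonzero term every column of `I` is matched with an upper row.
  have htop : ∀ y (hy : y ∈ I), (f ⟨y, Finset.mem_union_left _ hy⟩ : ℕ) < k := by
    intro y hy
    by_contra! hlt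
    apply hne ⟨y, Finset.mem_union_left _ hy⟩
    have hfy : f ⟨y, Finset.mem_union_left _ hy⟩ = Fin.natAdd k
        ⟨(f ⟨y, Finset.mem_union_left _ hy⟩ : ℕ) - k, by omega⟩ := by
      ext; simp; omega
    have hyy : y = Fin.castAdd n ⟨y, hI y hy⟩ := by ext; simp
    rw [hfy]
    conv_lhs => rw [show ((⟨y, Finset.mem_union_left _ hy⟩ : (I ∪ J : Finset _)) : Fin (n + n))
      = Fin.castAdd n ⟨y, hI y hy⟩ from hyy]
    exact slidingMat_natAdd_castAdd _ _ _ _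
  refine h ⟨fun hcI => ?_, ?_, hbJ⟩
  · set y : (I ∪ J : Finset _) := ⟨Fin.castAdd n c, Finset.mem_union_left _ hcI⟩ with hy
    have hk := htop _ hcI
    have hfy : f y = Fin.castAdd k ⟨(f y : ℕ), hk⟩ := by ext; simp
    apply hne y
    rw [hfy]
    change slidingMat _ _ _ (Fin.castAdd n c) = 0
    rw [slidingMat_castAdd_castAdd, Matrix.map_apply, hc, map_zero]
    intro hr
    rw [hr, ← hfb] at hfy
    have hcb : Fin.castAdd n c = b := congrArg Subtype.val (hf hfy)
    exact hbI (hcb ▸ hcI)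
  · -- Together with column `b`, the columns of `I` are matched injectively with upper rows.
    let g : {y // y ∈ insert b I} → Fin k := fun y =>
      ⟨f ⟨y, by
        rcases Finset.mem_insert.1 y.2 with h | h
        · rw [h]; exact hb
        · exact Finset.mem_union_left _ h⟩, by
        rcases y with ⟨y, hy⟩
        rcases Finset.mem_insert.1 hy with rfl | h
        · simp [hfb]
        · exact htop y h⟩
    have hg : Function.Injective g := by
      intro y z hyz
      have h1 := hf (Fin.ext (congrArg (fun t : Fin k => (t : ℕ)) hyz))
      exact Subtype.ext (Subtype.mk.inj h1)
    have := Fintype.card_le_of_injective g hg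
    rw [Fintype.card_coe, Finset.card_insert_of_notMem hbI, Fintype.card_fin] at this
    omega

/-! ### Counting pairs of column sets -/

open scoped Classical in
/-- The number of pairs whose minor may involve `x_{r,s}`; here `a` is a column of the first block
and `b` one of the second. -/
lemma card_filter_mdpPairs_le (n k : ℕ) (a b : Fin (n + n)) (ha : (a : ℕ) < n)
    (hb : n ≤ (b : ℕ)) :
    ((mdpPairs n k).filter fun p => a ∉ p.1 ∧ p.1.card < k ∧ b ∈ p.2).card ≤ dPrime n k := by
  set A : Finset (Fin (n + n)) := (Finset.univ.filter fun x => (x : ℕ) < n) with hA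
  set B : Finset (Fin (n + n)) := (Finset.univ.filter fun x => n ≤ (x : ℕ)) with hB
  have hAc : A.card = n := by
    rw [hA, Fin.card_filter_val_lt]; omega
  have hBc : B.card = n := by
    have h1 := Finset.card_filter_add_card_filter_not (s := (Finset.univ : Finset (Fin (n + n))))
      (fun x => (x : ℕ) < n)
    simp only [not_lt, Finset.card_univ, Fintype.card_fin] at h1
    change A.card + B.card = n + n at h1
    omega
  have hAe : (A.erase a).card = n - 1 := by
    rw [Finset.card_erase_of_mem (by simpa [hA] using ha), hAc]
  have hBe : (B.erase b).card = n - 1 := by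
    rw [Finset.card_erase_of_mem (by simpa [hB] using hb), hBc]
  let T : ℕ → ℕ → Finset (Finset (Fin (n + n)) × Finset (Fin (n + n))) := fun i j =>
    if k + 1 ≤ j ∧ i + j = 2 * k then
      ((A.erase a).powersetCard i ×ˢ (B.erase b).powersetCard (j - 1)).image
        fun p => (p.1, insert b p.2)
    else ∅
  calc _ ≤ ((Finset.range k).biUnion fun i => (Finset.range (n + 1)).biUnion (T i)).card := by
        refine Finset.card_le_card fun p hp => ?_
        obtain ⟨I, J⟩ := p
        simp only [mdpPairs, Finset.mem_filter, Finset.mem_univ, true_and] at hp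
        obtain ⟨⟨hI, hJ, -, -, hc⟩, haI, hIk, hbJ⟩ := hp
        have hJB : J ⊆ B := fun x hx => by simpa [hB] using hJ x hx
        have hJn : J.card ≤ n := (Finset.card_le_card hJB).trans hBc.le
        simp only [Finset.mem_biUnion, Finset.mem_range]
        refine ⟨I.card, hIk, J.card, by omega, ?_⟩
        simp only [T]
        rw [if_pos ⟨by omega, by omega⟩, Finset.mem_image]
        refine ⟨(I, J.erase b), ?_, by simp [Finset.insert_erase hbJ]⟩
        simp only [Finset.mem_product, Finset.mem_powersetCard]
        refine ⟨⟨fun x hx => ?_, trivial⟩, Finset.erase_subset_erase _ hJB,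
          Finset.card_erase_of_mem hbJ⟩
        refine Finset.mem_erase.2 ⟨fun h => haI (h ▸ hx), ?_⟩
        simpa [hA] using hI x hx
    _ ≤ dPrime n k := by
        refine Finset.card_biUnion_le.trans (Finset.sum_le_sum fun i _ => ?_)
        refine Finset.card_biUnion_le.trans (Finset.sum_le_sum fun j _ => ?_)
        simp only [T]
        split_ifs with h
        · refine Finset.card_image_le.trans ?_
          rw [Finset.card_product, Finset.card_powersetCard, Finset.card_powersetCard, hAe, hBe]
        · simp

theorem stmt5 {F : Type*} [Field F] {k n : ℕ} (hk : 0 < k) (hkn : k ≤ n)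
    (G0 : Matrix (Fin k) (Fin n) F) (hMDS : HasMDSProperty G0)
    (hstd : ∃ A : Matrix (Fin k) (Fin (n - k)) F, ∀ (r : Fin k) (c : Fin n),
      G0 r c = if h : (c : ℕ) < k then (if (r : ℕ) = (c : ℕ) then 1 else 0)
               else A r ⟨(c : ℕ) - k, by have := c.isLt; omega⟩)
    (r : Fin k) (s : Fin (n - k)) :
    MvPolynomial.degreeOf (r, s) (minorProductPoly G0) ≤ dPrime n k := by
  classical
  obtain ⟨A, hA⟩ := hstd
  set c : Fin n := Fin.castLE hkn r with hcdef
  have hc : ∀ x, x ≠ r → G0 x c = 0 := by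
    intro x hx
    rw [hA, dif_pos (by simp [hcdef]), if_neg]
    intro h
    exact hx (Fin.ext (by simpa [hcdef] using h))
  set b : Fin (n + n) := Fin.natAdd n (Fin.castLE (Nat.sub_le n k) s) with hb
  refine le_trans ?_ (card_filter_mdpPairs_le n k (Fin.castAdd n c) b (by simp) (by simp [hb]))
  rw [Finset.card_filter]
  refine (degreeOf_prod_le _ _ _).trans (Finset.sum_le_sum fun p hp => ?_)
  split_ifs with h
  · exact degreeOf_minor_le_one _ _ _ _ (degreeOf_slidingMat_le G0 r s) _
  · simp only [mdpPairs, Finset.mem_filter] at hp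
    exact (degreeOf_minor_slidingMat_eq_zero G0 r s c hc p.1 p.2 hp.2.1 h).le
end

section
/- For all integers n ≥ 1 and 0 ≤ k ≤ n, one has d'(n,k) = d'(n,n−k). -/
/-- `dPrime` as a single sum over the set of admissible index pairs. -/
theorem dPrime_eq_sum_filter (n k : ℕ) :
    dPrime n k = ∑ p ∈ (Finset.range k ×ˢ Finset.range (n + 1)).filter
        (fun p => k + 1 ≤ p.2 ∧ p.1 + p.2 = 2 * k),
      (n - 1).choose p.1 * (n - 1).choose (p.2 - 1) := by
  rw [Finset.sum_filter, Finset.sum_product]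
  rfl

theorem stmt6 (n k : ℕ) (hn : 1 ≤ n) (hk : k ≤ n) :
    dPrime n k = dPrime n (n - k) := by
  rw [dPrime_eq_sum_filter, dPrime_eq_sum_filter]
  refine Finset.sum_nbij' (fun p => (n - p.2, n - p.1)) (fun p => (n - p.2, n - p.1))
    ?_ ?_ ?_ ?_ ?_
  · rintro ⟨i, j⟩ h
    simp only [Finset.mem_filter, Finset.mem_product, Finset.mem_range] at h ⊢
    omega
  · rintro ⟨i, j⟩ h
    simp only [Finset.mem_filter, Finset.mem_product, Finset.mem_range] at h ⊢
    omega
  · rintro ⟨i, j⟩ h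
    simp only [Finset.mem_filter, Finset.mem_product, Finset.mem_range, Prod.mk.injEq] at h ⊢
    omega
  · rintro ⟨i, j⟩ h
    simp only [Finset.mem_filter, Finset.mem_product, Finset.mem_range, Prod.mk.injEq] at h ⊢
    omega
  · rintro ⟨i, j⟩ h
    simp only [Finset.mem_filter, Finset.mem_product, Finset.mem_range] at h ⊢
    have h1 : (n - 1).choose i = (n - 1).choose (n - i - 1) :=
      Nat.choose_symm_of_eq_add (by omega)
    have h2 : (n - 1).choose (j - 1) = (n - 1).choose (n - j) :=
      Nat.choose_symm_of_eq_add (by omega)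
    rw [h1, h2, mul_comm]
end

section
/- Let F be a field, let δ ≥ 1 and k > δ be integers, set n = k + δ, and let G₀ ∈ F^{k×n} be a superregular matrix. Over the polynomial ring F[y], let X ∈ F[y]^{k×δ} be the matrix with X_{s,s} = y^s for 1 ≤ s ≤ δ and all other entries 0, and set G₁ = (X | 0_{k×k}) ∈ F[y]^{k×n}. Then every nontrivial full-size minor of G₁ᶜ = [[G₀, G₁],[0, G₀]] (with the entries of G₀ viewed in F[y]) is a nonzero polynomial in y, and the difference between its degree and its order of vanishing at y = 0 is at most ⌊δ²/4⌋. -/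
/-!
Split every column of `G₁ᶜ` into its top half and its bottom half and expand the minor by
multilinearity in the columns. The result is `∑_T c_T y^{w(T)}`, where `T` is the set of columns
whose top half is kept, `c_T ∈ F`, and `w(T)` is the sum of the exponents carried by the
columns of `T` (zero for columns of the first block) (`det_expansion`).

Write `|I| = k - d`. A nonzero `c_T` forces `T = I ∪ U` with `|U| = d` and `U` contained in the set
`S` of selected columns of the second block that carry a power of `y` (`feasible_of_det_ne_zero`).
Conversely all these `c_T` are nonzero: the matrix is block triangular with diagonal blocks a minor
of `G₀` (columns `I`, rows not hit by `U`), an identity matrix, and a full-size minor of `G₀`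
(`det_keepTop_ne_zero`).

The exponents on `S` are distinct elements of `{1, …, δ}`, so the `d`-subset of smallest exponent
sum is unique (`exists_unique_min`) and its monomial does not cancel: the minor is
nonzero. Two `d`-subsets of `{1, …, δ}` have sums differing by at most `d (δ - d) ≤ δ² / 4`
(`sum_le_sum_add`), which bounds the spread of all exponents that occur.
-/

open Matrix Polynomial

/-- A matrix is superregular if every square minor of every size is nonzero. -/
def IsSuperregular {F : Type*} [Field F] {k n : ℕ} (G : Matrix (Fin k) (Fin n) F) : Prop :=
  ∀ (m : ℕ) (r : Fin m → Fin k) (c : Fin m → Fin n),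
    StrictMono r → StrictMono c → (G.submatrix r c).det ≠ 0

/-- The matrix `G₁ = (X | 0_{k×k})` over `F[y]`, where `X ∈ F[y]^{k×δ}` has
`X_{s,s} = y^s` for `1 ≤ s ≤ δ` and all other entries `0`. -/
noncomputable def diagYG1 (F : Type*) [Field F] (k δ : ℕ) :
    Matrix (Fin k) (Fin (k + δ)) (Polynomial F) :=
  fun r c => if (c : ℕ) < δ ∧ (r : ℕ) = (c : ℕ) then Polynomial.X ^ ((c : ℕ) + 1) else 0

/-! ### Sums over subsets of fixed size -/

/-- Among the `d`-element subsets of `S`, the one carrying the `d` smallest weights is the unique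
minimiser of the total weight. -/
lemma exists_unique_min {ι : Type*} [DecidableEq ι] (w : ι → ℕ) (S : Finset ι)
    (hw : Set.InjOn w S) (d : ℕ) (hd : d ≤ S.card) :
    ∃ L ⊆ S, L.card = d ∧ ∀ U ⊆ S, U.card = d → U ≠ L → ∑ j ∈ L, w j < ∑ j ∈ U, w j := by
  have hinit : ∃ L ⊆ S, L.card = d ∧ ∀ a ∈ L, ∀ b ∈ S, b ∉ L → w a < w b := by
    induction d with
    | zero => exact ⟨∅, by simp, by simp, by simp⟩
    | succ d ih =>
      obtain ⟨L, hLS, hLc, hL⟩ := ih (by omega)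
      have hne : (S \ L).Nonempty := by
        rw [← Finset.card_pos, Finset.card_sdiff_of_subset hLS]; omega
      obtain ⟨m, hm, hmin⟩ := Finset.exists_min_image (S \ L) w hne
      rw [Finset.mem_sdiff] at hm
      refine ⟨insert m L, ?_, ?_, ?_⟩
      · exact Finset.insert_subset hm.1 hLS
      · rw [Finset.card_insert_of_notMem hm.2, hLc]
      · intro a ha b hb hbL
        rw [Finset.mem_insert, not_or] at hbL
        rcases Finset.mem_insert.1 ha with rfl | ha
        · refine lt_of_le_of_ne (hmin b (Finset.mem_sdiff.2 ⟨hb, hbL.2⟩)) ?_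
          intro h
          exact hbL.1 (hw hb hm.1 h.symm)
        · exact hL a ha b hb hbL.2
  obtain ⟨L, hLS, hLc, hL⟩ := hinit
  refine ⟨L, hLS, hLc, fun U hUS hUc hne => ?_⟩
  have hcard : (L \ U).card = (U \ L).card :=
    Finset.card_sdiff_comm (hLc.trans hUc.symm)
  have hLU : (L \ U).Nonempty := by
    rw [Finset.nonempty_iff_ne_empty, Ne, Finset.sdiff_eq_empty_iff_subset]
    exact fun h => hne (Finset.eq_of_subset_of_card_le h (by omega)).symm
  obtain ⟨m, hm, hmax⟩ := Finset.exists_max_image (L \ U) w hLU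
  -- `w m` separates the weights of `L \ U` from those of `U \ L`.
  have h1 : ∑ j ∈ L \ U, w j ≤ (L \ U).card • w m := Finset.sum_le_card_nsmul _ _ _ hmax
  have h2 : (U \ L).card • (w m + 1) ≤ ∑ j ∈ U \ L, w j := by
    refine Finset.card_nsmul_le_sum _ _ _ fun b hb => ?_
    rw [Finset.mem_sdiff] at hb hm
    exact hL m hm.1 b (hUS hb.1) hb.2
  have h3 := Finset.card_pos.2 hLU
  have h4 := Finset.sum_inter_add_sum_sdiff L U w
  have h5 := Finset.sum_inter_add_sum_sdiff U L w
  rw [Finset.inter_comm U L] at h5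
  rw [← hcard] at h2
  simp only [smul_eq_mul, mul_add, mul_one] at h1 h2
  omega

/-- Distinct positive integers `w j` sum to at least `1 + 2 + ⋯ + |U|`. -/
lemma card_mul_le_two_sum {ι : Type*} [DecidableEq ι] (w : ι → ℤ) (U : Finset ι)
    (hw : Set.InjOn w U) (hpos : ∀ j ∈ U, 1 ≤ w j) :
    (U.card : ℤ) * (U.card + 1) ≤ 2 * ∑ j ∈ U, w j := by
  induction h : U.card generalizing U with
  | zero => rw [Finset.card_eq_zero.1 h]; simp
  | succ d ih =>
    have hne : U.Nonempty := by rw [← Finset.card_pos]; omega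
    obtain ⟨m, hm, hmax⟩ := Finset.exists_max_image U w hne
    have hsub : U.image w ⊆ Finset.Icc 1 (w m) := by
      intro x hx
      obtain ⟨j, hj, rfl⟩ := Finset.mem_image.1 hx
      exact Finset.mem_Icc.2 ⟨hpos j hj, hmax j hj⟩
    have hc := Finset.card_le_card hsub
    rw [Finset.card_image_of_injOn hw, Int.card_Icc, h] at hc
    have hih := ih (U.erase m)
      (hw.mono (by exact_mod_cast Finset.erase_subset m U))
      (fun j hj => hpos j (Finset.mem_of_mem_erase hj))
      (by rw [Finset.card_erase_of_mem hm, h]; rfl)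
    have hs := Finset.add_sum_erase U w hm
    have := hpos m hm
    have hd : (d : ℤ) + 1 ≤ w m := by omega
    push_cast
    nlinarith

/-- Two `d`-element sets of weights in `{1, …, δ}` have sums that differ by at most
`d (δ - d) ≤ δ² / 4`. -/
lemma sum_le_sum_add {ι : Type*} [DecidableEq ι] (w : ι → ℕ) (δ : ℕ) (U V : Finset ι)
    (hU : Set.InjOn w U) (hV : Set.InjOn w V) (hcard : U.card = V.card)
    (hUle : ∀ j ∈ U, w j ≤ δ) (hVpos : ∀ j ∈ V, 1 ≤ w j) :
    ∑ j ∈ U, w j ≤ ∑ j ∈ V, w j + δ ^ 2 / 4 := by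
  have h1 := card_mul_le_two_sum (fun j => (w j : ℤ)) V
    (fun a ha b hb h => hV ha hb (by simpa using h))
    (fun j hj => by exact_mod_cast hVpos j hj)
  -- The upper bound for `U` is the lower bound for the reflected weights `δ + 1 - w j`.
  have h2 := card_mul_le_two_sum (fun j => (δ : ℤ) + 1 - w j) U
    (fun a ha b hb h => hU ha hb (by simp only at h; omega))
    (fun j hj => by have := hUle j hj; omega)
  rw [Finset.sum_sub_distrib, Finset.sum_const, nsmul_eq_mul] at h2
  rw [← hcard] at h1
  have h3 : 4 * (∑ j ∈ U, (w j : ℤ) - ∑ j ∈ V, (w j : ℤ)) ≤ (δ : ℤ) ^ 2 := by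
    nlinarith [sq_nonneg ((δ : ℤ) - 2 * U.card)]
  have h4 : 4 * ∑ j ∈ U, w j ≤ 4 * ∑ j ∈ V, w j + δ ^ 2 := by
    zify; linarith
  omega

/-! ### Superregular matrices -/

/-- The columns of a superregular matrix indexed by `A` are linearly independent already on any set
`R` of at least `|A|` rows. -/
lemma IsSuperregular.eq_zero_of_sum {F : Type*} [Field F] {k n : ℕ}
    {G : Matrix (Fin k) (Fin n) F} (hG : IsSuperregular G) {ι : Type*}
    (A : Finset ι) (f : ι → Fin n) (hf : Set.InjOn f A) (R : Finset (Fin k))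
    (hR : A.card ≤ R.card) (u : ι → F) (hu : ∀ r ∈ R, ∑ j ∈ A, G r (f j) * u j = 0) :
    ∀ j ∈ A, u j = 0 := by
  intro j₀ hj₀
  have : Nonempty ι := ⟨j₀⟩
  obtain ⟨R', hR', hc⟩ := Finset.exists_subset_card_eq hR
  have hc' : (A.image f).card = A.card := Finset.card_image_of_injOn hf
  have hinv : ∀ j ∈ A, Function.invFunOn f (A : Set ι) (f j) = j :=
    fun j hj => hf.leftInvOn_invFunOn hj
  set v : Fin n → F := fun x => u (Function.invFunOn f (A : Set ι) x) with hv
  have hdet := hG A.card (R'.orderEmbOfFin hc) ((A.image f).orderEmbOfFin hc')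
    (OrderEmbedding.strictMono _) (OrderEmbedding.strictMono _)
  have hz := Matrix.eq_zero_of_mulVec_eq_zero hdet
    (v := fun i => v ((A.image f).orderEmbOfFin hc' i)) (by
      funext i
      simp only [Matrix.mulVec, dotProduct, Matrix.submatrix_apply, Pi.zero_apply]
      rw [← hu _ (hR' (R'.orderEmbOfFin_mem hc i))]
      have himg : (Finset.univ.image ((A.image f).orderEmbOfFin hc')) = A.image f := by
        exact Finset.image_orderEmbOfFin_univ _ _
      rw [← Finset.sum_image (s := Finset.univ) (g := (A.image f).orderEmbOfFin hc')
        (f := fun x => G (R'.orderEmbOfFin hc i) x * v x)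
        (fun a _ b _ h => ((A.image f).orderEmbOfFin hc').injective h), himg,
        Finset.sum_image hf]
      exact Finset.sum_congr rfl fun j hj => by simp only [hv, hinv j hj])
  have hmem : f j₀ ∈ Set.range ((A.image f).orderEmbOfFin hc') := by
    rw [Finset.range_orderEmbOfFin]
    exact_mod_cast Finset.mem_image_of_mem f hj₀
  obtain ⟨i, hi⟩ := hmem
  have := congrFun hz i
  simpa only [hi, hv, hinv j₀ hj₀, Pi.zero_apply] using this

/-! ### Expansion of the minor -/

/-- The sliding matrix over `F` with every power of `y` replaced by `1`, in block form. -/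
def baseMat {F : Type*} [Field F] {k : ℕ} (δ : ℕ) (G0 : Matrix (Fin k) (Fin (k + δ)) F) :
    Matrix (Fin k ⊕ Fin k) (Fin (k + δ) ⊕ Fin (k + δ)) F :=
  Matrix.fromBlocks G0
    (Matrix.of fun r c => if (c : ℕ) < δ ∧ (r : ℕ) = (c : ℕ) then 1 else 0) 0 G0

/-- The exponent of `y` carried by the top half of a column of the sliding matrix. Columns of the
second block beyond the first `δ` have zero top half, so their value here is irrelevant. -/
def colWeight {N : ℕ} : Fin N ⊕ Fin N → ℕ := Sum.elim (fun _ => 0) (fun s => (s : ℕ) + 1)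

/-- The square matrix on the columns selected by `c` in which the columns in `T` keep only
their top half and the other columns keep only their bottom half. -/
def keepTop {F : Type*} [Field F] {k δ : ℕ} (G0 : Matrix (Fin k) (Fin (k + δ)) F)
    (c : Fin k ⊕ Fin k → Fin (k + δ) ⊕ Fin (k + δ)) (T : Finset (Fin k ⊕ Fin k)) :
    Matrix (Fin k ⊕ Fin k) (Fin k ⊕ Fin k) F :=
  Matrix.of fun i j => if (i.isLeft = true ↔ j ∈ T) then baseMat δ G0 i (c j) else 0

lemma det_expansion {F : Type*} [Field F] {k δ : ℕ} (G0 : Matrix (Fin k) (Fin (k + δ)) F)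
    (c : Fin k ⊕ Fin k → Fin (k + δ) ⊕ Fin (k + δ)) :
    ((Matrix.fromBlocks (G0.map Polynomial.C) (diagYG1 F k δ) 0
      (G0.map Polynomial.C)).submatrix id c).det =
    ∑ T : Finset (Fin k ⊕ Fin k),
      Polynomial.C (keepTop G0 c T).det * Polynomial.X ^ (∑ j ∈ T, colWeight (c j)) := by
  set M := (Matrix.fromBlocks (G0.map Polynomial.C) (diagYG1 F k δ) 0
      (G0.map Polynomial.C)) with hM
  have htop : ∀ r x, M (Sum.inl r) x
      = Polynomial.X ^ colWeight x * Polynomial.C (baseMat δ G0 (Sum.inl r) x) := by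
    rintro r (x | x)
    · simp [hM, colWeight, baseMat]
    · simp only [hM, colWeight, baseMat, Matrix.fromBlocks_apply₁₂, diagYG1, Matrix.of_apply, Sum.elim_inr]
      split_ifs <;> simp
  have hbot : ∀ r x, M (Sum.inr r) x = Polynomial.C (baseMat δ G0 (Sum.inr r) x) := by
    rintro r (x | x) <;> simp [hM, baseMat]
  let m : (Fin k ⊕ Fin k) → (Fin k ⊕ Fin k) → Polynomial F :=
    fun j i => if i.isLeft then M i (c j) else 0
  let m' : (Fin k ⊕ Fin k) → (Fin k ⊕ Fin k) → Polynomial F :=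
    fun j i => if i.isLeft then 0 else M i (c j)
  have hsplit : (M.submatrix id c)ᵀ = m + m' := by
    funext j i
    rcases i with i | i <;> simp [m, m']
  rw [← Matrix.det_transpose, hsplit]
  have := (Matrix.detRowAlternating (n := Fin k ⊕ Fin k)
    (R := Polynomial F)).toMultilinearMap.map_add_univ m m'
  refine Eq.trans this (Finset.sum_congr rfl fun T _ => ?_)
  change Matrix.det (T.piecewise m m') = _
  have hpw : T.piecewise m m' = Matrix.of fun j i =>
      (if j ∈ T then Polynomial.X ^ colWeight (c j) else 1) *
        ((keepTop G0 c T).map Polynomial.C)ᵀ j i := by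
    funext j i
    by_cases hj : j ∈ T
    · rcases i with i | i <;> simp [m, hj, keepTop, htop]
    · rcases i with i | i <;> simp [m', hj, keepTop, hbot]
  rw [hpw, Matrix.det_mul_column, Matrix.det_transpose, mul_comm, Finset.prod_ite_mem,
    Finset.univ_inter, Finset.prod_pow_eq_pow_sum]
  congr 1
  exact (RingHom.map_det Polynomial.C _).symm

/-! ### The nonvanishing terms -/

/-- The sets `T` that contribute to the expansion: `k` columns including all those of the first
block, the others carrying a power of `y`. -/
def Feasible {k δ : ℕ} (c : Fin k ⊕ Fin k → Fin (k + δ) ⊕ Fin (k + δ))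
    (T : Finset (Fin k ⊕ Fin k)) : Prop :=
  T.card = k ∧ (∀ j, (c j).isLeft = true → j ∈ T) ∧
    ∀ j ∈ T, ∀ s, c j = Sum.inr s → (s : ℕ) < δ

/-- A nonzero Leibniz term matches the columns of `T` with the top rows through nonzero entries. -/
lemma feasible_of_det_ne_zero {F : Type*} [Field F] {k δ : ℕ}
    (G0 : Matrix (Fin k) (Fin (k + δ)) F)
    (c : Fin k ⊕ Fin k → Fin (k + δ) ⊕ Fin (k + δ)) (T : Finset (Fin k ⊕ Fin k))
    (h : (keepTop G0 c T).det ≠ 0) : Feasible c T := by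
  rw [Matrix.det_apply] at h
  obtain ⟨σ, -, hσ⟩ := Finset.exists_ne_zero_of_sum_ne_zero h
  have hσ' : ∀ j, keepTop G0 c T (σ j) j ≠ 0 := by
    intro j hj
    exact hσ (by rw [Finset.prod_eq_zero (f := fun i => keepTop G0 c T (σ i) i)
      (Finset.mem_univ j) hj, smul_zero])
  have hiff : ∀ j, (σ j).isLeft = true ↔ j ∈ T := by
    intro j
    by_contra hcon
    exact hσ' j (by simp only [keepTop, Matrix.of_apply, if_neg hcon])
  have hB : ∀ j, baseMat δ G0 (σ j) (c j) ≠ 0 := by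
    intro j
    have := hσ' j
    rwa [keepTop, Matrix.of_apply, if_pos (hiff j)] at this
  refine ⟨?_, ?_, ?_⟩
  · have himg : T.map σ.toEmbedding
        = Finset.univ.map (⟨Sum.inl, Sum.inl_injective⟩ : Fin k ↪ Fin k ⊕ Fin k) := by
      ext i
      obtain ⟨j, rfl⟩ := σ.surjective i
      rw [Finset.mem_map_equiv, Equiv.symm_apply_apply, ← hiff j, Sum.isLeft_iff]
      simp [eq_comm]
    have := congrArg Finset.card himg
    simpa using this
  · intro j hj
    rw [← hiff j]
    have := hB j
    rcases hs : σ j with r | r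
    · rfl
    · obtain ⟨x, hx⟩ := Sum.isLeft_iff.1 hj
      rw [hs, hx] at this
      simp [baseMat] at this
  · intro j hj s hs
    have := hB j
    obtain ⟨r, hr⟩ := Sum.isLeft_iff.1 ((hiff j).2 hj)
    rw [hr, hs] at this
    simp only [baseMat, Matrix.fromBlocks_apply₁₂, Matrix.of_apply] at this
    by_contra hcon
    exact this (if_neg fun h => hcon h.1)

lemma det_keepTop_ne_zero {F : Type*} [Field F] {k δ : ℕ} (hk : δ < k)
    (G0 : Matrix (Fin k) (Fin (k + δ)) F) (hsr : IsSuperregular G0)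
    (c : Fin k ⊕ Fin k → Fin (k + δ) ⊕ Fin (k + δ)) (hc : Function.Injective c)
    (T : Finset (Fin k ⊕ Fin k)) (hT : Feasible c T) : (keepTop G0 c T).det ≠ 0 := by
  obtain ⟨hcard, hA, hS⟩ := hT
  intro hdet
  obtain ⟨u, hu0, hu⟩ := Matrix.exists_mulVec_eq_zero_iff.2 hdet
  apply hu0
  set col : Fin k ⊕ Fin k → Fin (k + δ) := fun j => Sum.elim id id (c j) with hcol
  set A : Finset (Fin k ⊕ Fin k) := Finset.univ.filter fun j => (c j).isLeft = true with hAdef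
  have hAT : A ⊆ T := fun j hj => hA j (Finset.mem_filter.1 hj).2
  have hcA : ∀ j ∈ A, c j = Sum.inl (col j) := by
    intro j hj
    obtain ⟨x, hx⟩ := Sum.isLeft_iff.1 (Finset.mem_filter.1 hj).2
    simp [hcol, hx]
  have hcA' : ∀ j ∉ A, c j = Sum.inr (col j) := by
    intro j hj
    rcases hx : c j with x | x
    · exact absurd (Finset.mem_filter.2 ⟨Finset.mem_univ j, by simp [hx]⟩) hj
    · simp [hcol, hx]
  have htop : ∀ r, ∑ j ∈ T \ A, baseMat δ G0 (Sum.inl r) (c j) * u j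
      + ∑ j ∈ A, G0 r (col j) * u j = 0 := by
    intro r
    have h1 := congrFun hu (Sum.inl r)
    simp only [Matrix.mulVec, dotProduct, keepTop, Matrix.of_apply, Sum.isLeft_inl, true_iff, ite_mul, zero_mul,
      Pi.zero_apply, Finset.sum_ite_mem, Finset.univ_inter] at h1
    rw [← Finset.sum_sdiff hAT] at h1
    rw [← h1]
    congr 1
    refine Finset.sum_congr rfl fun j hj => ?_
    rw [hcA j hj]
    simp [baseMat]
  have hG1 : ∀ r, ∀ j ∈ T \ A, baseMat δ G0 (Sum.inl r) (c j)
      = if (r : ℕ) = (col j : ℕ) then 1 else 0 := by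
    intro r j hj
    rw [Finset.mem_sdiff] at hj
    have hlt := hS j hj.1 _ (hcA' j hj.2)
    rw [hcA' j hj.2]
    simp [baseMat, hlt]
  -- The top rows not hit by the unit columns only see the columns in `A`.
  have hzA : ∀ j ∈ A, u j = 0 := by
    set R : Finset (Fin k) :=
      Finset.univ.filter fun r => ∀ j ∈ T \ A, (r : ℕ) ≠ (col j : ℕ) with hR
    refine hsr.eq_zero_of_sum A col ?_ R ?_ u ?_
    · intro a ha b hb hab
      exact hc (by rw [hcA a ha, hcA b hb, hab])
    · have h1 : Rᶜ.image (fun r : Fin k => (r : ℕ)) ⊆ (T \ A).image fun j => (col j : ℕ) := by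
        intro x hx
        obtain ⟨r, hr, rfl⟩ := Finset.mem_image.1 hx
        simp only [hR, Finset.mem_compl, Finset.mem_filter, Finset.mem_univ, true_and,
          not_forall, not_not] at hr
        obtain ⟨j, hj, hjr⟩ := hr
        exact Finset.mem_image.2 ⟨j, hj, hjr.symm⟩
      have h2 := (Finset.card_le_card h1).trans Finset.card_image_le
      rw [Finset.card_image_of_injective _ Fin.val_injective, Finset.card_compl,
        Fintype.card_fin, Finset.card_sdiff_of_subset hAT] at h2
      have h3 := Finset.card_le_card hAT
      omega
    · intro r hr
      rw [← htop r, Finset.sum_eq_zero (s := T \ A), zero_add]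
      intro j hj
      rw [hG1 r j hj, if_neg ((Finset.mem_filter.1 hr).2 j hj), zero_mul]
  have hzT : ∀ j ∈ T \ A, u j = 0 := by
    intro j hj
    have hj' := Finset.mem_sdiff.1 hj
    have hlt := hS j hj'.1 _ (hcA' j hj'.2)
    have h1 := htop ⟨col j, by omega⟩
    rw [Finset.sum_eq_zero (s := A) (fun i hi => by rw [hzA i hi, mul_zero]), add_zero,
      Finset.sum_eq_single_of_mem j hj] at h1
    · rw [hG1 _ j hj] at h1
      simpa using h1
    · intro i hi hij
      rw [hG1 _ i hi, if_neg, zero_mul]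
      intro h
      apply hij
      apply hc
      rw [hcA' i (Finset.mem_sdiff.1 hi).2, hcA' j hj'.2]
      exact congrArg _ (Fin.ext h.symm)
  have hzC : ∀ j ∈ Tᶜ, u j = 0 := by
    have hnA : ∀ j ∈ Tᶜ, j ∉ A := fun j hj h => (Finset.mem_compl.1 hj) (hAT h)
    refine hsr.eq_zero_of_sum Tᶜ col ?_ Finset.univ ?_ u ?_
    · intro a ha b hb hab
      exact hc (by rw [hcA' a (hnA a ha), hcA' b (hnA b hb), hab])
    · simp [Finset.card_compl, hcard]
    · intro r _
      have h1 := congrFun hu (Sum.inr r)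
      simp only [Matrix.mulVec, dotProduct, keepTop, Matrix.of_apply, Sum.isLeft_inr, Bool.false_eq_true, false_iff,
        ite_mul, zero_mul, Pi.zero_apply, ← Finset.mem_compl, Finset.sum_ite_mem,
        Finset.univ_inter] at h1
      rw [← h1]
      refine Finset.sum_congr rfl fun j hj => ?_
      rw [hcA' j (hnA j hj)]
      simp [baseMat]
  funext j
  by_cases h1 : j ∈ T
  · by_cases h2 : j ∈ A
    · exact hzA j h2
    · exact hzT j (Finset.mem_sdiff.2 ⟨h1, h2⟩)
  · exact hzC j (Finset.mem_compl.2 h1)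

/-! ### The bound -/

/-- The statement for the block matrix indexed by sums, with the selected columns given by an
injective map. -/
lemma block_minor_bound {F : Type*} [Field F] {k δ : ℕ} (hk : δ < k)
    (G0 : Matrix (Fin k) (Fin (k + δ)) F) (hsr : IsSuperregular G0)
    (c : Fin k ⊕ Fin k → Fin (k + δ) ⊕ Fin (k + δ)) (hc : Function.Injective c)
    (hle : (Finset.univ.filter fun j => (c j).isLeft = true).card ≤ k)
    (P : Polynomial F)
    (hP : P = ((Matrix.fromBlocks (G0.map Polynomial.C) (diagYG1 F k δ) 0
      (G0.map Polynomial.C)).submatrix id c).det) :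
    P ≠ 0 ∧ P.natDegree ≤ P.rootMultiplicity 0 + δ ^ 2 / 4 := by
  rw [det_expansion] at hP
  set A : Finset (Fin k ⊕ Fin k) := Finset.univ.filter fun j => (c j).isLeft = true with hA
  set S : Finset (Fin k ⊕ Fin k) :=
    Finset.univ.filter fun j => ∃ s, c j = Sum.inr s ∧ (s : ℕ) < δ with hS
  set w : Fin k ⊕ Fin k → ℕ := fun j => colWeight (c j) with hw
  have hmemA : ∀ j, j ∈ A ↔ (c j).isLeft = true := fun j => by simp [hA]
  have hmemS : ∀ j, j ∈ S ↔ ∃ s, c j = Sum.inr s ∧ (s : ℕ) < δ := fun j => by simp [hS]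
  have hwS : Set.InjOn w S := by
    intro a ha b hb hab
    obtain ⟨s, hs, -⟩ := (hmemS a).1 ha
    obtain ⟨t, ht, -⟩ := (hmemS b).1 hb
    apply hc
    rw [hs, ht]
    simp only [hw, hs, ht, colWeight, Sum.elim_inr, add_left_inj] at hab
    exact congrArg _ (Fin.ext hab)
  have hwA : ∀ j ∈ A, w j = 0 := by
    intro j hj
    obtain ⟨x, hx⟩ := Sum.isLeft_iff.1 ((hmemA j).1 hj)
    simp [hw, hx, colWeight]
  have hwbd : ∀ j ∈ S, 1 ≤ w j ∧ w j ≤ δ := by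
    intro j hj
    obtain ⟨s, hs, hlt⟩ := (hmemS j).1 hj
    simp only [hw, hs, colWeight, Sum.elim_inr]
    omega
  have hdisj : ∀ j ∈ S, j ∉ A := by
    intro j hj
    obtain ⟨s, hs, -⟩ := (hmemS j).1 hj
    simp [hmemA, hs]
  -- The second block has only `k` columns without a power of `y`, so at most `k` columns
  -- lie outside `A ∪ S`.
  have hcardS : k - A.card ≤ S.card := by
    have h1 : (A ∪ S)ᶜ.image c
        ⊆ Finset.univ.image fun i : Fin k => (Sum.inr (Fin.cast (add_comm δ k) (Fin.natAdd δ i)) :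
          Fin (k + δ) ⊕ Fin (k + δ)) := by
      intro x hx
      obtain ⟨j, hj, rfl⟩ := Finset.mem_image.1 hx
      simp only [Finset.mem_compl, Finset.mem_union, not_or, hmemA, hmemS] at hj
      rcases hcj : c j with x | s
      · simp [hcj] at hj
      · have hs : δ ≤ (s : ℕ) := by
          by_contra hcon
          exact hj.2 ⟨s, hcj, by omega⟩
        refine Finset.mem_image.2 ⟨⟨(s : ℕ) - δ, by omega⟩, Finset.mem_univ _, ?_⟩
        refine congrArg _ (Fin.ext ?_)
        simp only [Fin.val_cast, Fin.natAdd_mk]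
        omega
    have h2 := (Finset.card_le_card h1).trans Finset.card_image_le
    rw [Finset.card_image_of_injective _ hc, Finset.card_compl, Finset.card_univ,
      Fintype.card_fin, Fintype.card_sum, Fintype.card_fin] at h2
    have h3 := Finset.card_union_le A S
    omega
  obtain ⟨L, hLS, hLc, hLmin⟩ := exists_unique_min w S hwS _ hcardS
  have hdecomp : ∀ T, Feasible c T → T \ A ⊆ S ∧ (T \ A).card = k - A.card ∧
      T = A ∪ (T \ A) ∧ ∑ j ∈ T, w j = ∑ j ∈ T \ A, w j := by
    rintro T ⟨h1, h2, h3⟩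
    have hAT : A ⊆ T := fun j hj => h2 j ((hmemA j).1 hj)
    refine ⟨?_, ?_, ?_, ?_⟩
    · intro j hj
      rw [Finset.mem_sdiff, hmemA] at hj
      rcases hcj : c j with x | s
      · simp [hcj] at hj
      · exact (hmemS j).2 ⟨s, hcj, h3 j hj.1 s hcj⟩
    · rw [Finset.card_sdiff_of_subset hAT, h1]
    · exact (Finset.union_sdiff_of_subset hAT).symm
    · rw [← Finset.sum_sdiff hAT, Finset.sum_eq_zero hwA, add_zero]
  have hAL : Disjoint A L := Finset.disjoint_left.2 fun j hj hjL => hdisj j (hLS hjL) hj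
  have hTL : Feasible c (A ∪ L) := by
    refine ⟨?_, ?_, ?_⟩
    · rw [Finset.card_union_of_disjoint hAL, hLc]; omega
    · exact fun j hj => Finset.mem_union_left _ ((hmemA j).2 hj)
    · intro j hj s hs
      rcases Finset.mem_union.1 hj with hj | hj
      · simp [hmemA, hs] at hj
      · obtain ⟨t, ht, hlt⟩ := (hmemS j).1 (hLS hj)
        rw [hs] at ht
        rwa [Sum.inr_injective ht]
  have hWL : ∑ j ∈ A ∪ L, w j = ∑ j ∈ L, w j := by
    rw [Finset.sum_union hAL, Finset.sum_eq_zero hwA, zero_add]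
  set e := ∑ j ∈ A ∪ L, w j with he
  have hlt : ∀ T, Feasible c T → T ≠ A ∪ L → e < ∑ j ∈ T, w j := by
    intro T hT hne
    obtain ⟨h1, h2, h3, h4⟩ := hdecomp T hT
    rw [h4, hWL]
    refine hLmin _ h1 h2 fun h => hne ?_
    rw [h3, h]
  have hub : ∀ T, Feasible c T → ∑ j ∈ T, w j ≤ e + δ ^ 2 / 4 := by
    intro T hT
    obtain ⟨h1, h2, h3, h4⟩ := hdecomp T hT
    rw [h4, hWL]
    exact sum_le_sum_add w δ _ _ (hwS.mono (by exact_mod_cast h1))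
      (hwS.mono (by exact_mod_cast hLS)) (by rw [h2, hLc])
      (fun j hj => (hwbd j (h1 hj)).2) (fun j hj => (hwbd j (hLS hj)).1)
  have hcoeff : P.coeff e = (keepTop G0 c (A ∪ L)).det := by
    rw [hP, Polynomial.finsetSum_coeff, Finset.sum_eq_single_of_mem (A ∪ L) (Finset.mem_univ _)]
    · rw [Polynomial.coeff_C_mul_X_pow, if_pos he]
    · intro T _ hne
      by_cases hz : (keepTop G0 c T).det = 0
      · simp [hz]
      · rw [Polynomial.coeff_C_mul_X_pow, if_neg]
        exact (hlt T (feasible_of_det_ne_zero G0 c T hz) hne).ne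
  have hP0 : P ≠ 0 := by
    intro h
    rw [h, Polynomial.coeff_zero] at hcoeff
    exact det_keepTop_ne_zero hk G0 hsr c hc _ hTL hcoeff.symm
  refine ⟨hP0, ?_⟩
  have hmult : e ≤ P.rootMultiplicity 0 := by
    rw [Polynomial.le_rootMultiplicity_iff hP0, Polynomial.C_0, sub_zero, hP]
    refine Finset.dvd_sum fun T _ => ?_
    by_cases hz : (keepTop G0 c T).det = 0
    · simp [hz]
    · refine Dvd.dvd.mul_left (pow_dvd_pow _ ?_) _
      by_cases hne : T = A ∪ L
      · rw [hne]
      · exact (hlt T (feasible_of_det_ne_zero G0 c T hz) hne).le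
  have hdeg : P.natDegree ≤ e + δ ^ 2 / 4 := by
    rw [hP]
    refine Polynomial.natDegree_sum_le_of_forall_le _ _ fun T _ => ?_
    by_cases hz : (keepTop G0 c T).det = 0
    · simp [hz]
    · exact (Polynomial.natDegree_C_mul_X_pow_le _ _).trans
        (hub T (feasible_of_det_ne_zero G0 c T hz))
  omega

theorem stmt12 {F : Type*} [Field F] {k δ : ℕ} (hδ : 1 ≤ δ) (hk : δ < k)
    (G0 : Matrix (Fin k) (Fin (k + δ)) F) (hsr : IsSuperregular G0)
    (I J : Finset (Fin ((k + δ) + (k + δ))))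
    (hI : ∀ x ∈ I, (x : ℕ) < k + δ) (hJ : ∀ x ∈ J, k + δ ≤ (x : ℕ))
    (hIc : I.card ≤ k) (hsum : I.card + J.card = k + k) :
    minorOfCols (slidingMat (G0.map Polynomial.C) (diagYG1 F k δ)) (I ∪ J) ≠ 0 ∧
    (minorOfCols (slidingMat (G0.map Polynomial.C) (diagYG1 F k δ)) (I ∪ J)).natDegree
      ≤ (minorOfCols (slidingMat (G0.map Polynomial.C) (diagYG1 F k δ))
            (I ∪ J)).rootMultiplicity 0 + δ ^ 2 / 4 := by
  have hdisj : Disjoint I J := Finset.disjoint_left.2 fun x hx hx' => by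
    have := hI x hx
    have := hJ x hx'
    omega
  have hcard : (I ∪ J).card = k + k := by rw [Finset.card_union_of_disjoint hdisj, hsum]
  set f : Fin (k + k) → Fin ((k + δ) + (k + δ)) :=
    fun i => ((I ∪ J).orderIsoOfFin hcard i).1 with hf
  have hfinj : Function.Injective f :=
    Subtype.val_injective.comp ((I ∪ J).orderIsoOfFin hcard).injective
  refine block_minor_bound hk G0 hsr (fun j => finSumFinEquiv.symm (f (finSumFinEquiv j)))
    (finSumFinEquiv.symm.injective.comp (hfinj.comp finSumFinEquiv.injective)) ?_ _ ?_
  · refine le_trans ?_ hIc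
    refine Finset.card_le_card_of_injOn (fun j => f (finSumFinEquiv j)) ?_
      (hfinj.comp finSumFinEquiv.injective).injOn
    intro j hj
    obtain ⟨x, hx⟩ := Sum.isLeft_iff.1 (Finset.mem_filter.1 hj).2
    have hx' : f (finSumFinEquiv j) = Fin.castAdd _ x := by
      rw [Equiv.symm_apply_eq] at hx
      simpa using hx
    have hmem : f (finSumFinEquiv j) ∈ I ∪ J := ((I ∪ J).orderIsoOfFin hcard _).2
    rcases Finset.mem_union.1 hmem with h | h
    · exact h
    · have := hJ _ h
      rw [hx', Fin.val_castAdd] at this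
      omega
  · rw [minorOfCols, dif_pos hcard, ← Matrix.det_submatrix_equiv_self finSumFinEquiv]
    congr 1
    ext i j
    simp [slidingMat, hf]
end
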